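/- arXiv:1512.08879 — 2 statements merged into one kernel-verified Lean document; each statement's English description precedes it below -/
import Mathlib

section
/- Fix t > 0 with t ≠ 2 and x ∈ ℝ, and let g_n = (c_n x + d_n)^{1/t} for n large enough that c_n x + d_n > 0. Then as n → ∞, 1 − Φ(g_n) = n^{−1} e^{−x} ( 1 − ϑ₁ b_n^{−2} + ϑ₂ b_n^{−4} + O(b_n^{−6}) ), where ϑ₁ = 1 + x + ((2−t)/2) x² and ϑ₂ = 3 + 3x + (3/2) x² + ((2−t)(2t+1)/6) x³ + ((t−2)²/8) x⁴; that is, there exist C > 0 and N such that for all n ≥ N, |n e^{x} (1 − Φ(g_n)) − (1 − ϑ₁ b_n^{−2} + ϑ₂ b_n^{−4})| ≤ C b_n^{−6}. -/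
open Real Filter Topology

/-- The standard normal distribution function. -/
noncomputable def stdNormalCDF (x : ℝ) : ℝ :=
  ∫ u in Set.Iic x, Real.exp (-u ^ 2 / 2) / Real.sqrt (2 * Real.pi)


theorem aux_rpow_taylor (p : ℝ) :
    (fun y : ℝ => (1 + y) ^ p - (1 + p * y + p * (p - 1) / 2 * y ^ 2
      + p * (p - 1) * (p - 2) / 6 * y ^ 3)) =O[𝓝 0] (fun y : ℝ => y ^ 4) := by
  have h := (Real.one_add_rpow_hasFPowerSeriesAt_zero (a := p)).isBigO_sub_partialSum_pow 4
  have h2 : Ring.choose p 2 = p * (p - 1) / 2 := by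
    rw [Ring.choose_eq_smul]
    simp [descPochhammer_succ_right, Polynomial.smeval_mul, Polynomial.smeval_natCast,
      Polynomial.smeval_sub, Nat.factorial]
    ring
  have h22 : (2 : Polynomial ℤ).smeval p = 2 := by
    simpa using Polynomial.smeval_natCast ℤ p 2
  have h3 : Ring.choose p 3 = p * (p - 1) * (p - 2) / 6 := by
    rw [Ring.choose_eq_smul]
    simp [descPochhammer_succ_right, Polynomial.smeval_mul, Polynomial.smeval_natCast,
      Polynomial.smeval_sub, Nat.factorial, h22]
    ring
  refine (h.congr_left ?_).trans (Asymptotics.isBigO_of_le _ ?_)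
  · intro y
    simp [FormalMultilinearSeries.partialSum, Finset.sum_range_succ,
      -FormalMultilinearSeries.apply_eq_prod_smul_coeff, h2, h3]
  · intro y
    simp

/-- second-order expansion in a small parameter -/
def SExp (s f : ℕ → ℝ) (a₀ a₁ a₂ : ℝ) : Prop :=
  (fun n => f n - (a₀ + a₁ * s n + a₂ * s n ^ 2)) =O[atTop] (fun n => s n ^ 3)

section
variable {s : ℕ → ℝ}

theorem aux_pow_isBigO (hs : Tendsto s atTop (𝓝 0)) {m k : ℕ} (h : k ≤ m) :
    (fun n => s n ^ m) =O[atTop] (fun n => s n ^ k) := by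
  obtain ⟨j, rfl⟩ := Nat.exists_eq_add_of_le h
  have h1 : (fun n => s n ^ j) =O[atTop] (fun _ => (1 : ℝ)) :=
    (hs.pow j).isBigO_one ℝ
  have := (Asymptotics.isBigO_refl (fun n => s n ^ k) atTop).mul h1
  simpa [pow_add] using this

theorem aux_poly_isBigO_one (hs : Tendsto s atTop (𝓝 0)) (q : ℝ → ℝ) (hq : Continuous q) :
    (fun n => q (s n)) =O[atTop] (fun _ => (1 : ℝ)) :=
  ((hq.tendsto 0).comp hs).isBigO_one ℝ

theorem SExp.isBigO_one (hs : Tendsto s atTop (𝓝 0)) {f : ℕ → ℝ} {a₀ a₁ a₂ : ℝ}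
    (hf : SExp s f a₀ a₁ a₂) : f =O[atTop] (fun _ => (1 : ℝ)) := by
  have h1 := aux_poly_isBigO_one hs (fun y => a₀ + a₁ * y + a₂ * y ^ 2) (by fun_prop)
  have h2 := (aux_pow_isBigO hs (Nat.zero_le 3))
  simp only [pow_zero] at h2
  have := (Asymptotics.IsBigO.trans hf h2).add h1
  simpa using this

theorem SExp.isBigO_self (hs : Tendsto s atTop (𝓝 0)) {f : ℕ → ℝ} {a₁ a₂ : ℝ}
    (hf : SExp s f 0 a₁ a₂) : f =O[atTop] s := by
  have h1 := (Asymptotics.isBigO_refl s atTop).mul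
    (aux_poly_isBigO_one hs (fun y => a₁ + a₂ * y) (by fun_prop))
  have h2 := (aux_pow_isBigO hs (show 1 ≤ 3 by norm_num))
  have := (Asymptotics.IsBigO.trans hf h2).add (h1.congr_right (g₂ := fun n => s n ^ 1) (by simp))
  refine this.congr ?_ (by simp)
  intro n; ring

theorem SExp.add {f g : ℕ → ℝ} {a₀ a₁ a₂ b₀ b₁ b₂ : ℝ}
    (hf : SExp s f a₀ a₁ a₂) (hg : SExp s g b₀ b₁ b₂) :
    SExp s (fun n => f n + g n) (a₀ + b₀) (a₁ + b₁) (a₂ + b₂) := by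
  refine (Asymptotics.IsBigO.add hf hg).congr_left ?_
  intro n; ring

theorem SExp.const_mul {f : ℕ → ℝ} {a₀ a₁ a₂ : ℝ} (k : ℝ)
    (hf : SExp s f a₀ a₁ a₂) :
    SExp s (fun n => k * f n) (k * a₀) (k * a₁) (k * a₂) := by
  refine (Asymptotics.IsBigO.const_mul_left hf k).congr_left ?_
  intro n; ring

theorem SExp.const (k : ℝ) : SExp s (fun _ => k) k 0 0 := by
  refine (Asymptotics.isBigO_zero _ _).congr_left ?_
  intro n; ring

theorem SExp.of_bigO {f g : ℕ → ℝ} {a₀ a₁ a₂ : ℝ} (hf : SExp s f a₀ a₁ a₂)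
    (h : (fun n => g n - f n) =O[atTop] (fun n => s n ^ 3)) : SExp s g a₀ a₁ a₂ := by
  refine (Asymptotics.IsBigO.add hf h).congr_left ?_
  intro n; ring

theorem SExp.mul (hs : Tendsto s atTop (𝓝 0)) {f g : ℕ → ℝ} {a₀ a₁ a₂ b₀ b₁ b₂ : ℝ}
    (hf : SExp s f a₀ a₁ a₂) (hg : SExp s g b₀ b₁ b₂) :
    SExp s (fun n => f n * g n) (a₀ * b₀) (a₀ * b₁ + a₁ * b₀)
      (a₀ * b₂ + a₁ * b₁ + a₂ * b₀) := by
  have h1 := (Asymptotics.IsBigO.mul hf (hg.isBigO_one hs))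
  have h2 := Asymptotics.IsBigO.mul
    (aux_poly_isBigO_one hs (fun y => a₀ + a₁ * y + a₂ * y ^ 2) (by fun_prop)) hg
  have h3 := (Asymptotics.isBigO_refl (fun n => s n ^ 3) atTop).mul
    (aux_poly_isBigO_one hs (fun y => (a₁ * b₂ + a₂ * b₁) + a₂ * b₂ * y) (by fun_prop))
  simp only [mul_one, one_mul] at h1 h2 h3
  refine ((h1.add h2).add h3).congr_left ?_
  intro n; ring

theorem SExp.exp (hs : Tendsto s atTop (𝓝 0)) {f : ℕ → ℝ} {a₁ a₂ : ℝ}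
    (hf : SExp s f 0 a₁ a₂) :
    SExp s (fun n => Real.exp (f n)) 1 a₁ (a₂ + a₁ ^ 2 / 2) := by
  have hO := hf.isBigO_self hs
  have hf0 : Tendsto f atTop (𝓝 0) := hO.trans_tendsto hs
  have h := ((Real.exp_sub_sum_range_isBigO_pow 3).comp_tendsto hf0).trans (hO.pow 3)
  have h2 := ((SExp.const (s := s) 1).add hf).add ((hf.mul hs hf).const_mul (1 / 2))
  have h3 := h2.of_bigO (g := fun n => Real.exp (f n)) (by
    refine h.congr_left ?_
    intro n
    simp [Finset.sum_range_succ, Nat.factorial]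
    ring)
  convert h3 using 1 <;> ring

theorem aux_SExp_rpow (hs : Tendsto s atTop (𝓝 0)) (p k : ℝ) :
    SExp s (fun n => (1 + k * s n) ^ p) 1 (p * k) (p * (p - 1) / 2 * k ^ 2) := by
  have hk : Tendsto (fun n => k * s n) atTop (𝓝 0) := by simpa using hs.const_mul k
  have h := (aux_rpow_taylor p).comp_tendsto hk
  have h0 : (fun n => (k * s n) ^ 4) =O[atTop] (fun n => s n ^ 3) := by
    simpa [mul_pow] using (aux_pow_isBigO hs (show 3 ≤ 4 by norm_num)).const_mul_left (k ^ 4)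
  have h1 := (Asymptotics.isBigO_refl (fun n => s n ^ 3) atTop).const_mul_left
    (p * (p - 1) * (p - 2) / 6 * k ^ 3)
  refine ((h.trans h0).add h1).congr_left ?_
  intro n; simp only [Function.comp]; ring

theorem aux_SExp_expo (hs : Tendsto s atTop (𝓝 0)) (hpos : ∀ᶠ n in atTop, 0 < s n) (p k : ℝ) :
    SExp s (fun n => ((1 + k * s n) ^ p - 1) / s n) (p * k) (p * (p - 1) / 2 * k ^ 2)
      (p * (p - 1) * (p - 2) / 6 * k ^ 3) := by
  have hk : Tendsto (fun n => k * s n) atTop (𝓝 0) := by simpa using hs.const_mul k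
  have h := (aux_rpow_taylor p).comp_tendsto hk
  have h0 : (fun n => (k * s n) ^ 4) =O[atTop] (fun n => s n ^ 4) := by
    simpa [mul_pow] using (Asymptotics.isBigO_refl (fun n => s n ^ 4) atTop).const_mul_left (k ^ 4)
  have h1 := (h.trans h0).mul (Asymptotics.isBigO_refl (fun n => (s n)⁻¹) atTop)
  refine h1.congr' ?_ ?_
  · filter_upwards [hpos] with n hn
    simp only [Function.comp]
    field_simp
    ring
  · filter_upwards [hpos] with n hn
    field_simp
end

theorem aux_gauss_int : MeasureTheory.Integrable (fun u : ℝ => Real.exp (-u ^ 2 / 2)) := by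
  have := integrable_exp_neg_mul_sq (b := 1 / 2) (by norm_num)
  refine this.congr (Eventually.of_forall fun u => ?_)
  simp only; congr 1; ring

theorem aux_exp_tendsto : Tendsto (fun u : ℝ => Real.exp (-u ^ 2 / 2)) atTop (𝓝 0) := by
  refine Real.tendsto_exp_atBot.comp ?_
  have : Tendsto (fun u : ℝ => u ^ 2 / 2) atTop atTop :=
    (tendsto_pow_atTop (by norm_num)).atTop_div_const (by norm_num)
  refine (tendsto_neg_atTop_atBot.comp this).congr ?_
  intro u; simp only [Function.comp]; ring

theorem aux_exp_deriv (u : ℝ) : HasDerivAt (fun u : ℝ => Real.exp (-u ^ 2 / 2))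
    (-u * Real.exp (-u ^ 2 / 2)) u := by
  have h : HasDerivAt (fun u : ℝ => -u ^ 2 / 2) (-u) u := by
    have := ((hasDerivAt_pow 2 u).neg).div_const 2
    refine this.congr_deriv ?_
    simp; ring
  refine h.exp.congr_deriv ?_
  ring

theorem aux_mills (g : ℝ) (hg : 0 < g) :
    |g * Real.exp (g ^ 2 / 2) * (∫ u in Set.Ioi g, Real.exp (-u ^ 2 / 2)) -
      (1 - 1 / g ^ 2 + 3 * (1 / g ^ 2) ^ 2)| ≤ 15 * (1 / g ^ 2) ^ 3 := by
  set E : ℝ → ℝ := fun u => Real.exp (-u ^ 2 / 2) with hE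
  have hEpos : ∀ u, 0 < E u := fun u => Real.exp_pos _
  have hd1 : ∀ u ∈ Set.Ici g, HasDerivAt
      (fun u => -(E u * (u⁻¹ - u⁻¹ ^ 3 + 3 * u⁻¹ ^ 5))) (E u * (1 + 15 * u⁻¹ ^ 6)) u := by
    intro u hu
    have hu0 : 0 < u := lt_of_lt_of_le hg hu
    have hi := hasDerivAt_inv hu0.ne'
    have := ((aux_exp_deriv u).mul ((hi.sub (hi.pow 3)).add ((hi.pow 5).const_mul 3))).neg
    refine this.congr_deriv ?_
    simp only [hE, Pi.sub_apply, Pi.add_apply, Pi.pow_apply, Nat.add_one_sub_one]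
    norm_num
    field_simp
    ring
  have ht1 : Tendsto (fun u => -(E u * (u⁻¹ - u⁻¹ ^ 3 + 3 * u⁻¹ ^ 5))) atTop (𝓝 0) := by
    have hi : Tendsto (fun u : ℝ => u⁻¹) atTop (𝓝 0) := tendsto_inv_atTop_zero
    have := (aux_exp_tendsto.mul ((hi.sub (hi.pow 3)).add ((hi.pow 5).const_mul 3))).neg
    simpa using this
  have hn1 : ∀ u ∈ Set.Ioi g, 0 ≤ E u * (1 + 15 * u⁻¹ ^ 6) := by
    intro u hu
    have := hEpos u
    positivity
  have hI1 := MeasureTheory.integral_Ioi_of_hasDerivAt_of_nonneg' hd1 hn1 ht1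
  have hJ1 := MeasureTheory.integrableOn_Ioi_deriv_of_nonneg' hd1 hn1 ht1
  have hd2 : ∀ u ∈ Set.Ici g, HasDerivAt (fun u => -E u) (u * E u) u := by
    intro u hu
    refine (aux_exp_deriv u).neg.congr_deriv ?_
    simp only [hE]; ring
  have ht2 : Tendsto (fun u => -E u) atTop (𝓝 0) := by simpa using aux_exp_tendsto.neg
  have hn2 : ∀ u ∈ Set.Ioi g, 0 ≤ u * E u := by
    intro u hu
    exact mul_nonneg (hg.trans hu).le (hEpos u).le
  have hI2 := MeasureTheory.integral_Ioi_of_hasDerivAt_of_nonneg' hd2 hn2 ht2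
  have hJ2 := MeasureTheory.integrableOn_Ioi_deriv_of_nonneg' hd2 hn2 ht2
  have hJ0 : MeasureTheory.IntegrableOn E (Set.Ioi g) := aux_gauss_int.integrableOn
  have up : ∫ u in Set.Ioi g, E u ≤ ∫ u in Set.Ioi g, E u * (1 + 15 * u⁻¹ ^ 6) := by
    refine MeasureTheory.setIntegral_mono_on hJ0 hJ1 measurableSet_Ioi ?_
    intro u hu
    have h1 : 0 ≤ 15 * u⁻¹ ^ 6 := by positivity
    nlinarith [hEpos u]
  have lo : ∫ u in Set.Ioi g, E u * (1 + 15 * u⁻¹ ^ 6) ≤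
      ∫ u in Set.Ioi g, (E u + 15 * g⁻¹ ^ 7 * (u * E u)) := by
    refine MeasureTheory.setIntegral_mono_on hJ1 (hJ0.add (hJ2.const_mul _)) measurableSet_Ioi ?_
    intro u hu
    have hu' : g < u := hu
    have hu0 : 0 < u := hg.trans hu
    have h1 : u⁻¹ ^ 6 ≤ g⁻¹ ^ 7 * u := by
      have : u⁻¹ ^ 7 ≤ g⁻¹ ^ 7 := by gcongr
      calc u⁻¹ ^ 6 = u⁻¹ ^ 7 * u := by field_simp
        _ ≤ _ := by gcongr
    nlinarith [mul_le_mul_of_nonneg_left h1 (hEpos u).le]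
  rw [MeasureTheory.integral_add hJ0 (hJ2.const_mul _), MeasureTheory.integral_const_mul, hI2] at lo
  rw [hI1] at up lo
  set Q := ∫ u in Set.Ioi g, E u
  have hEg : Real.exp (g ^ 2 / 2) * E g = 1 := by
    rw [hE, ← Real.exp_add]; simp; ring
  have hp : 0 < g * Real.exp (g ^ 2 / 2) := by positivity
  have up' := mul_le_mul_of_nonneg_left up hp.le
  have lo' := mul_le_mul_of_nonneg_left lo hp.le
  have e1 : g * Real.exp (g ^ 2 / 2) * (0 - -(E g * (g⁻¹ - g⁻¹ ^ 3 + 3 * g⁻¹ ^ 5))) =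
      1 - 1 / g ^ 2 + 3 * (1 / g ^ 2) ^ 2 := by
    calc _ = (Real.exp (g ^ 2 / 2) * E g) * (g * (g⁻¹ - g⁻¹ ^ 3 + 3 * g⁻¹ ^ 5)) := by ring
      _ = _ := by rw [hEg]; field_simp
  have e2 : g * Real.exp (g ^ 2 / 2) * (Q + 15 * g⁻¹ ^ 7 * (0 - -E g)) =
      g * Real.exp (g ^ 2 / 2) * Q + 15 * (1 / g ^ 2) ^ 3 := by
    calc _ = g * Real.exp (g ^ 2 / 2) * Q +
          (Real.exp (g ^ 2 / 2) * E g) * (15 * g * g⁻¹ ^ 7) := by ring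
      _ = _ := by rw [hEg]; field_simp
  rw [e1] at up' lo'
  rw [e2] at lo'
  have : 0 ≤ 15 * (1 / g ^ 2) ^ 3 := by positivity
  rw [abs_le]
  constructor <;> linarith

theorem aux_one_sub_cdf (g : ℝ) : 1 - stdNormalCDF g =
    (∫ u in Set.Ioi g, Real.exp (-u ^ 2 / 2)) / Real.sqrt (2 * Real.pi) := by
  have hpos : 0 < Real.sqrt (2 * Real.pi) := by positivity
  have htot : ∫ u : ℝ, Real.exp (-u ^ 2 / 2) = Real.sqrt (2 * Real.pi) := by
    have := integral_gaussian (1 / 2)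
    rw [show Real.pi / (1 / 2) = 2 * Real.pi by ring] at this
    rw [← this]
    congr 1; ext u; congr 1; ring
  have hadd := MeasureTheory.integral_add_compl (μ := MeasureTheory.volume)
    (measurableSet_Iic (a := g)) aux_gauss_int
  rw [Set.compl_Iic, htot] at hadd
  unfold stdNormalCDF
  rw [MeasureTheory.integral_div]
  rw [eq_div_iff hpos.ne', sub_mul, div_mul_cancel₀ _ hpos.ne']
  linarith

theorem aux_b_tendsto (b : ℕ → ℝ)
    (hb : ∀ n : ℕ, 1 ≤ n → 0 < b n ∧
      2 * Real.pi * (b n) ^ 2 * Real.exp ((b n) ^ 2) = (n : ℝ) ^ 2) :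
    Tendsto b atTop atTop := by
  rw [tendsto_atTop]
  intro B
  have h1 : Tendsto (fun n : ℕ => (n : ℝ) ^ 2) atTop atTop :=
    (tendsto_pow_atTop (by norm_num)).comp tendsto_natCast_atTop_atTop
  filter_upwards [h1.eventually_gt_atTop (2 * Real.pi * B ^ 2 * Real.exp (B ^ 2)),
    eventually_ge_atTop 1] with n hn hn1
  by_contra hlt
  push Not at hlt
  obtain ⟨h0, he⟩ := hb n hn1
  have : 2 * Real.pi * (b n) ^ 2 * Real.exp ((b n) ^ 2) ≤
      2 * Real.pi * B ^ 2 * Real.exp (B ^ 2) := by gcongr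
  linarith

theorem aux_n_eq (n : ℕ) (β : ℝ) (hβ : 0 < β)
    (h : 2 * Real.pi * β ^ 2 * Real.exp (β ^ 2) = (n : ℝ) ^ 2) :
    (n : ℝ) = Real.sqrt (2 * Real.pi) * β * Real.exp (β ^ 2 / 2) := by
  rw [← sq_eq_sq₀ (by positivity) (by positivity), ← h, mul_pow, mul_pow,
    Real.sq_sqrt (by positivity), ← Real.exp_nat_mul]
  congr 2
  push_cast; ring

theorem aux_identity (n : ℕ) (β t x w G : ℝ) (hβ : 0 < β) (ht : 0 < t) (hw : 0 < w)
    (hG : G = β * w ^ (1 / t))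
    (h : 2 * Real.pi * β ^ 2 * Real.exp (β ^ 2) = (n : ℝ) ^ 2) :
    (n : ℝ) * Real.exp x * (1 - stdNormalCDF G) =
      w ^ (-1 / t) * Real.exp (x + (-1 / 2) * ((w ^ (2 / t) - 1) / (1 / β ^ 2))) *
      (G * Real.exp (G ^ 2 / 2) * ∫ u in Set.Ioi G, Real.exp (-u ^ 2 / 2)) := by
  have hs : 0 < Real.sqrt (2 * Real.pi) := by positivity
  have h2 : w ^ (2 / t) = (w ^ (1 / t)) ^ 2 := by
    rw [← Real.rpow_natCast, ← Real.rpow_mul hw.le]; congr 1; push_cast; ring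
  have h3 : w ^ (-1 / t) * w ^ (1 / t) = 1 := by
    rw [← Real.rpow_add hw, ← Real.rpow_zero w]; congr 1; ring
  rw [aux_one_sub_cdf, aux_n_eq n β hβ h]
  set Q := ∫ u in Set.Ioi G, Real.exp (-u ^ 2 / 2)
  have he : Real.exp (β ^ 2 / 2) * Real.exp x =
      Real.exp (x + (-1 / 2) * ((w ^ (2 / t) - 1) / (1 / β ^ 2))) * Real.exp (G ^ 2 / 2) := by
    rw [← Real.exp_add, ← Real.exp_add, h2, hG]
    congr 1
    field_simp
    ring
  calc _ = β * (Real.exp (β ^ 2 / 2) * Real.exp x) * Q := by field_simp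
    _ = (w ^ (-1 / t) * w ^ (1 / t)) * β * (Real.exp (β ^ 2 / 2) * Real.exp x) * Q := by
      rw [h3, one_mul]
    _ = _ := by rw [he]; rw [show w ^ (-1 / t) * w ^ (1 / t) * β = w ^ (-1 / t) * G by rw [hG]; ring]; ring

/-- With `b_n` the unique positive solution of `2π b_n² exp(b_n²) = n²`,
`c_n = t b_n^{t−2}`, `d_n = b_n^t` (for `t > 0`, `t ≠ 2`) and `g_n = (c_n x + d_n)^{1/t}`:
`1 − Φ(g_n) = n⁻¹ e^{−x} (1 − ϑ₁ b_n^{−2} + ϑ₂ b_n^{−4} + O(b_n^{−6}))`, where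
`ϑ₁ = 1 + x + ((2−t)/2)x²` and
`ϑ₂ = 3 + 3x + (3/2)x² + ((2−t)(2t+1)/6)x³ + ((t−2)²/8)x⁴`. -/
theorem powered_extremes_tail_expansion
    (b : ℕ → ℝ)
    (hb : ∀ n : ℕ, 1 ≤ n → 0 < b n ∧
      2 * Real.pi * (b n) ^ 2 * Real.exp ((b n) ^ 2) = (n : ℝ) ^ 2)
    (t : ℝ) (ht : 0 < t) (ht2 : t ≠ 2) (x : ℝ)
    (c d g : ℕ → ℝ)
    (hc : ∀ n : ℕ, c n = t * b n ^ (t - 2))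
    (hd : ∀ n : ℕ, d n = b n ^ t)
    (hg : ∀ n : ℕ, g n = (c n * x + d n) ^ (1 / t)) :
    ∃ C > (0 : ℝ), ∃ N : ℕ, ∀ n : ℕ, N ≤ n →
      0 < c n * x + d n ∧
      |(n : ℝ) * Real.exp x * (1 - stdNormalCDF (g n)) -
        (1 - (1 + x + (2 - t) / 2 * x ^ 2) / (b n) ^ 2 +
          (3 + 3 * x + 3 / 2 * x ^ 2 + (2 - t) * (2 * t + 1) / 6 * x ^ 3 +
            (t - 2) ^ 2 / 8 * x ^ 4) / (b n) ^ 4)|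
      ≤ C / (b n) ^ 6 := by
  have hbt := aux_b_tendsto b hb
  set s : ℕ → ℝ := fun n => 1 / b n ^ 2 with hsdef
  have hs : Tendsto s atTop (𝓝 0) := by
    have h1 : Tendsto (fun n => b n ^ 2) atTop atTop :=
      (tendsto_pow_atTop (by norm_num)).comp hbt
    refine h1.inv_tendsto_atTop.congr fun n => ?_
    simp [hsdef]
  have hpos : ∀ᶠ n in atTop, 0 < s n := by
    filter_upwards [hbt.eventually_gt_atTop 0] with n hn
    simp only [hsdef]; positivity
  have hwpos : ∀ᶠ n in atTop, 0 < 1 + t * x * s n := by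
    have h1 : Tendsto (fun n => 1 + t * x * s n) atTop (𝓝 (1 + t * x * 0)) :=
      (hs.const_mul (t * x)).const_add 1
    exact h1.eventually (lt_mem_nhds (by norm_num))
  have hcd : ∀ᶠ n in atTop, c n * x + d n = b n ^ t * (1 + t * x * s n) := by
    filter_upwards [hbt.eventually_gt_atTop 0] with n hn
    rw [hc, hd, Real.rpow_sub hn, Real.rpow_two]
    simp only [hsdef]; field_simp; ring
  have hG : ∀ᶠ n in atTop, g n = b n * (1 + t * x * s n) ^ (1 / t) := by
    filter_upwards [hbt.eventually_gt_atTop 0, hcd, hwpos] with n hn h1 hw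
    rw [hg, h1, Real.mul_rpow (by positivity) hw.le, ← Real.rpow_mul hn.le,
      mul_one_div_cancel ht.ne', Real.rpow_one]
  have hh : SExp s (fun n => s n * (1 + t * x * s n) ^ (-2 / t)) 0 1 (-2 * x) := by
    have h1 : SExp s s 0 1 0 := by
      refine (Asymptotics.isBigO_zero _ _).congr_left ?_
      intro n; ring
    have h2 := h1.mul hs (aux_SExp_rpow hs (-2 / t) (t * x))
    convert h2 using 1
    · ring
    · ring
    · field_simp; ring
  have hginv : ∀ᶠ n in atTop, 1 / g n ^ 2 = s n * (1 + t * x * s n) ^ (-2 / t) := by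
    filter_upwards [hbt.eventually_gt_atTop 0, hG, hwpos] with n hn h1 hw
    have h3 : (1 + t * x * s n) ^ (-2 / t) = (((1 + t * x * s n) ^ (1 / t)) ^ 2)⁻¹ := by
      rw [← Real.rpow_natCast, ← Real.rpow_mul hw.le, ← Real.rpow_neg hw.le]
      congr 1; push_cast; ring
    rw [h1, h3, mul_pow]
    simp only [hsdef]
    rw [one_div, mul_inv, one_div]
  have hM : SExp s (fun n => g n * Real.exp (g n ^ 2 / 2) *
      ∫ u in Set.Ioi (g n), Real.exp (-u ^ 2 / 2)) 1 (-1) (2 * x + 3) := by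
    have h1 := ((SExp.const (s := s) 1).add (hh.const_mul (-1))).add
      ((hh.mul hs hh).const_mul 3)
    have h2 := h1.of_bigO (g := fun n => g n * Real.exp (g n ^ 2 / 2) *
      ∫ u in Set.Ioi (g n), Real.exp (-u ^ 2 / 2)) (by
      refine Asymptotics.IsBigO.trans ?_ ((hh.isBigO_self hs).pow 3)
      refine Asymptotics.IsBigO.of_bound 15 ?_
      filter_upwards [hginv, hG, hwpos, hbt.eventually_gt_atTop 0, hpos] with n h3 h4 hw hn hsn
      have hg0 : 0 < g n := by rw [h4]; positivity
      have hm := aux_mills (g n) hg0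
      rw [h3] at hm
      have hw' : 0 ≤ (s n * (1 + t * x * s n) ^ (-2 / t)) ^ 3 := by positivity
      rw [Real.norm_eq_abs, Real.norm_eq_abs, abs_of_nonneg hw']
      convert hm using 2
      ring)
    convert h2 using 1 <;> ring
  have hE : SExp s (fun n => x + (-1 / 2) * (((1 + t * x * s n) ^ (2 / t) - 1) / s n)) 0
      (-(2 - t) / 2 * x ^ 2) (-(2 - t) * (1 - t) / 3 * x ^ 3) := by
    have h1 := (SExp.const (s := s) x).add
      ((aux_SExp_expo hs hpos (2 / t) (t * x)).const_mul (-1 / 2))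
    convert h1 using 1 <;> (field_simp; try ring)
  have hW := aux_SExp_rpow hs (-1 / t) (t * x)
  have hF := (hW.mul hs (hE.exp hs)).mul hs hM
  obtain ⟨C, hC, hCb⟩ := Asymptotics.IsBigO.exists_pos hF
  rw [Asymptotics.isBigOWith_iff] at hCb
  have hall := (((((hCb.and hG).and hcd).and hwpos).and
    (hbt.eventually_gt_atTop 0)).and hpos).and (eventually_ge_atTop 1)
  obtain ⟨N, hN⟩ := eventually_atTop.1 hall
  refine ⟨C, hC, N, fun n hn => ?_⟩
  obtain ⟨⟨⟨⟨⟨⟨h1, h2⟩, h3⟩, h4⟩, h5⟩, h6⟩, h7⟩ := hN n hn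
  refine ⟨by rw [h3]; positivity, ?_⟩
  rw [aux_identity n (b n) t x _ (g n) h5 ht h4 h2 (hb n h7).2]
  rw [Real.norm_eq_abs, Real.norm_eq_abs, abs_of_nonneg (by positivity : 0 ≤ s n ^ 3)] at h1
  have e : C * s n ^ 3 = C / b n ^ 6 := by
    simp only [hsdef]; field_simp
  rw [← e]
  refine le_of_eq_of_le ?_ h1
  congr 1
  congr 1
  simp only [hsdef]
  field_simp
  ring
end

section
/- Fix x ∈ ℝ and let ν_n = Φ(h_n)^{n−1} − (1 − Φ(h_n))^{n−1} where h_n = (c_n x + d_n)^{1/2}, with c_n = 2 − 2b_n^{−2} and d_n = b_n² − 2b_n^{−2}, defined for n large enough that c_n x + d_n > 0. Then as n → ∞, ν_n = Λ(x) ( 1 − e^{−x} b_n^{−4} (7/2 + 3x + x²) + e^{−x} b_n^{−6} (43/3 + 14x + 6x² + (4/3) x³) + O(b_n^{−8}) ). -/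
open Real Filter Topology

/-- The Gumbel distribution function `Λ(x) = exp(−e^{−x})`. -/
noncomputable def gumbel (x : ℝ) : ℝ := Real.exp (-Real.exp (-x))


namespace PowExt

open MeasureTheory Asymptotics

lemma integrable_gauss : Integrable (fun u : ℝ => Real.exp (-u ^ 2 / 2)) := by
  have := integrable_exp_neg_mul_sq (b := 1 / 2) (by norm_num)
  refine this.congr (Filter.Eventually.of_forall fun u => ?_)
  simp only
  congr 1
  ring

lemma one_sub_cdf (h : ℝ) : (1 - stdNormalCDF h) * √(2 * π) =
    ∫ u in Set.Ioi h, Real.exp (-u ^ 2 / 2) := by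
  have h1 := intervalIntegral.integral_Iic_add_Ioi (b := h)
    integrable_gauss.integrableOn integrable_gauss.integrableOn
  have h2 : ∫ u : ℝ, Real.exp (-u ^ 2 / 2) = √(2 * π) := by
    have := integral_gaussian (1 / 2)
    rw [show π / (1 / 2) = 2 * π by ring] at this
    rw [← this]
    congr 1
    ext u
    congr 1
    ring
  have h3 : stdNormalCDF h * √(2 * π) = ∫ u in Set.Iic h, Real.exp (-u ^ 2 / 2) := by
    unfold stdNormalCDF
    rw [integral_div]
    have : √(2 * π) ≠ 0 := by positivity
    field_simp
  rw [sub_mul, h3, one_mul, ← h2, ← h1]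
  ring

lemma cdf_bounds (h : ℝ) : 0 ≤ stdNormalCDF h ∧ stdNormalCDF h ≤ 1 := by
  constructor
  · unfold stdNormalCDF
    exact integral_nonneg fun u => by positivity
  · have h1 := one_sub_cdf h
    have h2 : 0 ≤ ∫ u in Set.Ioi h, Real.exp (-u ^ 2 / 2) :=
      integral_nonneg fun u => by positivity
    have h3 : 0 < √(2 * π) := by positivity
    rw [← h1] at h2
    have := nonneg_of_mul_nonneg_left h2 h3
    linarith

lemma tendsto_gauss : Tendsto (fun t : ℝ => Real.exp (-t ^ 2 / 2)) atTop (𝓝 0) := by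
  refine Real.tendsto_exp_atBot.comp ?_
  have h1 : Tendsto (fun t : ℝ => t ^ 2 / 2) atTop atTop :=
    (tendsto_pow_atTop (by norm_num)).atTop_div_const (by norm_num)
  refine (tendsto_neg_atTop_atBot.comp h1).congr fun t => ?_
  simp only [Function.comp]
  ring

lemma tendsto_aux (k : ℝ) : Tendsto (fun t : ℝ => -(Real.exp (-t ^ 2 / 2) *
    (t⁻¹ - t⁻¹ ^ 3 + 3 * t⁻¹ ^ 5 - 15 * t⁻¹ ^ 7 + k * t⁻¹ ^ 9))) atTop (𝓝 0) := by
  have h1 : Tendsto (fun t : ℝ => t⁻¹) atTop (𝓝 0) := tendsto_inv_atTop_zero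
  have := (tendsto_gauss.mul (((((h1.sub (h1.pow 3)).add ((h1.pow 5).const_mul 3)).sub
    ((h1.pow 7).const_mul 15))).add ((h1.pow 9).const_mul k))).neg
  simpa using this

lemma deriv_aux (k t : ℝ) (ht : 0 < t) : HasDerivAt (fun t : ℝ => -(Real.exp (-t ^ 2 / 2) *
    (t⁻¹ - t⁻¹ ^ 3 + 3 * t⁻¹ ^ 5 - 15 * t⁻¹ ^ 7 + k * t⁻¹ ^ 9)))
    (Real.exp (-t ^ 2 / 2) * (1 + (k - 105) * t⁻¹ ^ 8 + 9 * k * t⁻¹ ^ 10)) t := by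
  have hi : HasDerivAt (fun t : ℝ => t⁻¹) (-(t ^ 2)⁻¹) t := hasDerivAt_inv ht.ne'
  have he : HasDerivAt (fun t : ℝ => Real.exp (-t ^ 2 / 2))
      (Real.exp (-t ^ 2 / 2) * (-t)) t := by
    have : HasDerivAt (fun t : ℝ => -t ^ 2 / 2) (-t) t := by
      have := ((hasDerivAt_pow 2 t).neg).div_const 2
      refine this.congr_deriv ?_
      norm_num
      ring
    exact this.exp
  have := (he.mul (((((hi.sub (hi.pow 3)).add ((hi.pow 5).const_mul 3)).sub
    ((hi.pow 7).const_mul 15))).add ((hi.pow 9).const_mul k))).neg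
  refine this.congr_deriv ?_
  simp only [Pi.add_apply, Pi.sub_apply, Pi.pow_apply]
  have e1 : t⁻¹ = 1 / t := by simp
  rw [e1]
  push_cast
  field_simp
  ring

lemma mills (h : ℝ) (hh : 2 ≤ h) :
    |((1 - stdNormalCDF h) * √(2 * π)) * h * Real.exp (h ^ 2 / 2) -
      (1 - (h ^ 2)⁻¹ + 3 * (h ^ 2)⁻¹ ^ 2 - 15 * (h ^ 2)⁻¹ ^ 3)| ≤ 105 * (h ^ 2)⁻¹ ^ 4 := by
  have h0 : 0 < h := by linarith
  rw [one_sub_cdf]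
  have key : ∀ t ∈ Set.Ici h, 0 ≤ 1 - 105 * t⁻¹ ^ 8 := by
    intro t ht
    have ht' : 2 ≤ t := hh.trans ht
    have : t⁻¹ ≤ 1 / 2 := by
      rw [inv_le_comm₀ (by linarith) (by norm_num)]; linarith
    have h3 : t⁻¹ ^ 8 ≤ (1 / 2) ^ 8 := pow_le_pow_left₀ (by positivity) this 8
    norm_num at h3 ⊢
    linarith
  have d0 : ∀ t ∈ Set.Ici h, _ := fun t ht => deriv_aux 0 t (h0.trans_le ht)
  have d1 : ∀ t ∈ Set.Ici h, _ := fun t ht => deriv_aux 105 t (h0.trans_le ht)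
  have p0 : ∀ t ∈ Set.Ioi h, 0 ≤
      Real.exp (-t ^ 2 / 2) * (1 + (0 - 105) * t⁻¹ ^ 8 + 9 * 0 * t⁻¹ ^ 10) := by
    intro t ht
    have := key t (Set.mem_Ici.2 (le_of_lt ht))
    refine mul_nonneg (by positivity) ?_
    linarith
  have p1 : ∀ t ∈ Set.Ioi h, 0 ≤
      Real.exp (-t ^ 2 / 2) * (1 + (105 - 105) * t⁻¹ ^ 8 + 9 * 105 * t⁻¹ ^ 10) := by
    intro t ht
    have : 0 < t := h0.trans ht
    refine mul_nonneg (by positivity) ?_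
    have : 0 ≤ t⁻¹ ^ 10 := by positivity
    linarith
  have i0 := integrableOn_Ioi_deriv_of_nonneg' d0 p0 (tendsto_aux 0)
  have i1 := integrableOn_Ioi_deriv_of_nonneg' d1 p1 (tendsto_aux 105)
  have e0 := integral_Ioi_of_hasDerivAt_of_nonneg' d0 p0 (tendsto_aux 0)
  have e1 := integral_Ioi_of_hasDerivAt_of_nonneg' d1 p1 (tendsto_aux 105)
  have l0 := setIntegral_mono_on i0 integrable_gauss.integrableOn measurableSet_Ioi
    (fun t ht => by
      have : 0 < t := h0.trans ht
      have : 0 ≤ t⁻¹ ^ 8 := by positivity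
      refine mul_le_of_le_one_right (by positivity) ?_
      linarith)
  have l1 := setIntegral_mono_on integrable_gauss.integrableOn i1 measurableSet_Ioi
    (fun t ht => by
      have : 0 < t := h0.trans ht
      have : 0 ≤ t⁻¹ ^ 10 := by positivity
      refine le_mul_of_one_le_right (by positivity) ?_
      linarith)
  rw [e0] at l0
  rw [e1] at l1
  generalize (∫ u in Set.Ioi h, Real.exp (-u ^ 2 / 2)) = I at *
  have hE : Real.exp (-h ^ 2 / 2) * Real.exp (h ^ 2 / 2) = 1 := by
    rw [← Real.exp_add, show -h ^ 2 / 2 + h ^ 2 / 2 = 0 by ring, Real.exp_zero]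
  have hp : 0 ≤ h * Real.exp (h ^ 2 / 2) := by positivity
  have m0 := mul_le_mul_of_nonneg_right l0 hp
  have m1 := mul_le_mul_of_nonneg_right l1 hp
  have q : ∀ k : ℝ, (0 - -(Real.exp (-h ^ 2 / 2) *
    (h⁻¹ - h⁻¹ ^ 3 + 3 * h⁻¹ ^ 5 - 15 * h⁻¹ ^ 7 + k * h⁻¹ ^ 9))) *
      (h * Real.exp (h ^ 2 / 2)) =
      1 - (h ^ 2)⁻¹ + 3 * (h ^ 2)⁻¹ ^ 2 - 15 * (h ^ 2)⁻¹ ^ 3 + k * (h ^ 2)⁻¹ ^ 4 := by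
    intro k
    have : (0 - -(Real.exp (-h ^ 2 / 2) *
      (h⁻¹ - h⁻¹ ^ 3 + 3 * h⁻¹ ^ 5 - 15 * h⁻¹ ^ 7 + k * h⁻¹ ^ 9))) *
      (h * Real.exp (h ^ 2 / 2)) = (Real.exp (-h ^ 2 / 2) * Real.exp (h ^ 2 / 2)) *
      ((h⁻¹ - h⁻¹ ^ 3 + 3 * h⁻¹ ^ 5 - 15 * h⁻¹ ^ 7 + k * h⁻¹ ^ 9) * h) := by ring
    rw [this, hE]
    field_simp
  rw [q] at m0 m1
  rw [abs_le]
  have : 0 ≤ (h ^ 2)⁻¹ ^ 4 := by positivity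
  constructor <;> linarith

/-- `f = a0 + a1 e + a2 e^2 + a3 e^3 + O(e^4)`. -/
def T (e f : ℕ → ℝ) (a0 a1 a2 a3 : ℝ) : Prop :=
  (fun n => f n - (a0 + a1 * e n + a2 * e n ^ 2 + a3 * e n ^ 3)) =O[atTop] fun n => e n ^ 4

variable {e f g : ℕ → ℝ} {a0 a1 a2 a3 b0 b1 b2 b3 : ℝ}

lemma e_bdd (he : Tendsto e atTop (𝓝 0)) (P : ℝ → ℝ) (hP : Continuous P) :
    (fun n => P (e n)) =O[atTop] (fun _ => (1 : ℝ)) :=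
  ((hP.tendsto 0).comp he).isBigO_one ℝ

lemma T.tendsto (he : Tendsto e atTop (𝓝 0)) (hf : T e f a0 a1 a2 a3) :
    Tendsto f atTop (𝓝 a0) := by
  have h1 : Tendsto (fun n => f n - (a0 + a1 * e n + a2 * e n ^ 2 + a3 * e n ^ 3))
      atTop (𝓝 0) := hf.trans_tendsto (by simpa using he.pow 4)
  have h2 : Continuous (fun t : ℝ => a0 + a1 * t + a2 * t ^ 2 + a3 * t ^ 3) := by fun_prop
  have h3 := h1.add ((h2.tendsto 0).comp he)
  simpa using h3

lemma T.mul (he : Tendsto e atTop (𝓝 0)) (hf : T e f a0 a1 a2 a3) (hg : T e g b0 b1 b2 b3) :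
    T e (fun n => f n * g n) (a0 * b0) (a0 * b1 + a1 * b0) (a0 * b2 + a1 * b1 + a2 * b0)
      (a0 * b3 + a1 * b2 + a2 * b1 + a3 * b0) := by
  have hgb : g =O[atTop] (fun _ => (1 : ℝ)) := (hg.tendsto he).isBigO_one ℝ
  have h1 := IsBigO.mul hf hgb
  have h2 := IsBigO.mul (e_bdd he (fun t => a0 + a1 * t + a2 * t ^ 2 + a3 * t ^ 3)
    (by fun_prop)) hg
  have h3 := IsBigO.mul (e_bdd he (fun t => (a1 * b3 + a2 * b2 + a3 * b1) +
    (a2 * b3 + a3 * b2) * t + a3 * b3 * t ^ 2) (by fun_prop))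
    (isBigO_refl (fun n => e n ^ 4) atTop)
  simp only [mul_one, one_mul] at h1 h2 h3
  refine ((h1.add h2).add h3).congr_left fun n => ?_
  ring

lemma T.add (hf : T e f a0 a1 a2 a3) (hg : T e g b0 b1 b2 b3) :
    T e (fun n => f n + g n) (a0 + b0) (a1 + b1) (a2 + b2) (a3 + b3) := by
  refine (IsBigO.add hf hg).congr_left fun n => ?_
  ring

lemma T.smul (k : ℝ) (hf : T e f a0 a1 a2 a3) :
    T e (fun n => k * f n) (k * a0) (k * a1) (k * a2) (k * a3) := by
  refine (IsBigO.const_mul_left hf k).congr_left fun n => ?_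
  ring

lemma T.const (k : ℝ) : T e (fun _ => k) k 0 0 0 := by
  refine (isBigO_zero _ _).congr_left fun n => ?_
  ring

lemma T.poly : T e (fun n => a0 + a1 * e n + a2 * e n ^ 2 + a3 * e n ^ 3) a0 a1 a2 a3 := by
  refine (isBigO_zero _ _).congr_left fun n => ?_
  ring

lemma T.of_isBigO (hf : T e f a0 a1 a2 a3)
    (h : (fun n => g n - f n) =O[atTop] fun n => e n ^ 4) : T e g a0 a1 a2 a3 := by
  refine (IsBigO.add h hf).congr_left fun n => ?_
  ring

lemma T.isBigO_e (he : Tendsto e atTop (𝓝 0)) (hf : T e f 0 a1 a2 a3) : f =O[atTop] e := by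
  have h1 : (fun n => e n ^ 4) =O[atTop] e := by
    have := IsBigO.mul (e_bdd he (fun t => t ^ 3) (by fun_prop)) (isBigO_refl e atTop)
    refine (this.congr_left fun n => ?_).congr_right fun n => ?_
    · ring
    · ring
  have h2 := IsBigO.mul (e_bdd he (fun t => a1 + a2 * t + a3 * t ^ 2) (by fun_prop))
    (isBigO_refl e atTop)
  simp only [one_mul] at h2
  refine ((IsBigO.trans hf h1).add h2).congr_left fun n => ?_
  ring

lemma T.congr (hf : T e f a0 a1 a2 a3) (h0 : a0 = b0) (h1 : a1 = b1) (h2 : a2 = b2)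
    (h3 : a3 = b3) : T e f b0 b1 b2 b3 := by
  subst h0 h1 h2 h3
  exact hf

/-- composition with a cubic -/
lemma T.cubic (he : Tendsto e atTop (𝓝 0)) (hf : T e f 0 a1 a2 a3) (k0 k1 k2 k3 : ℝ) :
    T e (fun n => k0 + k1 * f n + k2 * f n ^ 2 + k3 * f n ^ 3)
      k0 (k1 * a1) (k1 * a2 + k2 * a1 ^ 2) (k1 * a3 + 2 * k2 * a1 * a2 + k3 * a1 ^ 3) := by
  have h2 := hf.mul he hf
  have h3 := h2.mul he hf
  have := ((((T.const (e := e) k0).add (hf.smul k1)).add (h2.smul k2)).add (h3.smul k3))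
  have h4 := this.congr (b0 := k0) (b1 := k1 * a1) (b2 := k1 * a2 + k2 * a1 ^ 2)
    (b3 := k1 * a3 + 2 * k2 * a1 * a2 + k3 * a1 ^ 3) (by ring) (by ring) (by ring) (by ring)
  refine IsBigO.congr_left h4 fun n => ?_
  ring

/-- composition with a function having a cubic expansion -/
lemma T.comp (he : Tendsto e atTop (𝓝 0)) (hf : T e f 0 a1 a2 a3) {G : ℝ → ℝ}
    {k0 k1 k2 k3 C : ℝ}
    (hG : ∀ᶠ t in 𝓝 (0 : ℝ), |G t - (k0 + k1 * t + k2 * t ^ 2 + k3 * t ^ 3)| ≤ C * |t| ^ 4) :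
    T e (fun n => G (f n))
      k0 (k1 * a1) (k1 * a2 + k2 * a1 ^ 2) (k1 * a3 + 2 * k2 * a1 * a2 + k3 * a1 ^ 3) := by
  refine (hf.cubic he k0 k1 k2 k3).of_isBigO ?_
  have h1 : (fun n => f n ^ 4) =O[atTop] fun n => e n ^ 4 := (hf.isBigO_e he).pow 4
  refine IsBigO.trans (IsBigO.of_bound C ?_) h1
  filter_upwards [(hf.tendsto he).eventually hG] with n hn
  simpa using hn

lemma exp_cubic : ∀ᶠ t in 𝓝 (0 : ℝ),
    |Real.exp t - (1 + 1 * t + 1 / 2 * t ^ 2 + 1 / 6 * t ^ 3)| ≤ 1 * |t| ^ 4 := by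
  filter_upwards [Metric.ball_mem_nhds (0 : ℝ) one_pos] with t ht
  have ht' : |t| < 1 := by simpa using ht
  have := Real.exp_bound ht'.le (n := 4) (by norm_num)
  simp only [Finset.sum_range_succ, Finset.sum_range_zero, Nat.factorial] at this
  have h4 : 0 ≤ |t| ^ 4 := by positivity
  norm_num at this
  rw [show Real.exp t - (1 + 1 * t + 1 / 2 * t ^ 2 + 1 / 6 * t ^ 3) =
    Real.exp t - (1 + t + t ^ 2 / 2 + t ^ 3 / 6) by ring]
  linarith

lemma log_cubic : ∀ᶠ t in 𝓝 (0 : ℝ),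
    |Real.log (1 + t) - (0 + 1 * t + (-1 / 2) * t ^ 2 + 1 / 3 * t ^ 3)| ≤ 2 * |t| ^ 4 := by
  filter_upwards [Metric.ball_mem_nhds (0 : ℝ) (ε := 1 / 2) (by norm_num)] with t ht
  have ht' : |t| < 1 / 2 := by simpa using ht
  have := Real.abs_log_sub_add_sum_range_le (x := -t) (by rw [abs_neg]; linarith) 3
  simp only [Finset.sum_range_succ, Finset.sum_range_zero, abs_neg] at this
  have h4 : 0 ≤ |t| ^ 4 := by positivity
  have h5 : |t| ^ (3 + 1) / (1 - |t|) ≤ 2 * |t| ^ 4 := by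
    rw [div_le_iff₀ (by linarith)]
    have h6 := mul_nonneg h4 (show (0 : ℝ) ≤ 1 / 2 - |t| by linarith)
    norm_num
    linarith
  refine le_trans (le_of_eq ?_) (this.trans h5)
  congr 1
  rw [show 1 - -t = 1 + t by ring]
  push_cast
  ring

lemma inv_cubic : ∀ᶠ t in 𝓝 (0 : ℝ),
    |(1 + t)⁻¹ - (1 + (-1) * t + 1 * t ^ 2 + (-1) * t ^ 3)| ≤ 2 * |t| ^ 4 := by
  filter_upwards [Metric.ball_mem_nhds (0 : ℝ) (ε := 1 / 2) (by norm_num)] with t ht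
  have ht' : |t| < 1 / 2 := by simpa using ht
  have h1 := abs_lt.1 ht'
  have h2 : 1 / 2 < 1 + t := by linarith
  have h3 : (1 + t)⁻¹ - (1 + (-1) * t + 1 * t ^ 2 + (-1) * t ^ 3) = (1 + t)⁻¹ * t ^ 4 := by
    have : 1 + t ≠ 0 := by linarith
    field_simp
    ring
  rw [h3, abs_mul, abs_pow]
  gcongr
  rw [abs_of_nonneg (by positivity), inv_le_comm₀ (by linarith) (by norm_num)]
  linarith

lemma pow_approx (n : ℕ) (hn : 2 ≤ n) (p : ℝ) (hp0 : 0 ≤ p) (hp1 : p ≤ 1) :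
    |(1 - p) ^ (n - 1) - p ^ (n - 1) - Real.exp (-(n * p))| ≤
      ((n * p) ^ 2 + 2 * (n * p)) * (n : ℝ)⁻¹ := by
  obtain ⟨m, rfl⟩ : ∃ m, n = m + 1 := ⟨n - 1, by omega⟩
  have hm : 1 ≤ m := by omega
  simp only [Nat.add_sub_cancel]
  have e1 : |(1 - p) ^ m - Real.exp (-p) ^ m| ≤ p ^ 2 * m := by
    have h1 := abs_pow_sub_pow_le (1 - p) (Real.exp (-p)) m
    have h2 := Real.abs_exp_sub_one_sub_id_le (x := -p) (by rw [abs_neg, abs_of_nonneg hp0]; exact hp1)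
    have h3 : |1 - p - Real.exp (-p)| ≤ p ^ 2 := by
      rw [abs_sub_comm]
      rw [neg_sq] at h2
      convert h2 using 2
      ring
    have h4 : max |1 - p| |Real.exp (-p)| ≤ 1 := by
      refine max_le ?_ ?_
      · rw [abs_of_nonneg (by linarith)]; linarith
      · rw [abs_of_pos (Real.exp_pos _)]
        exact Real.exp_le_one_iff.2 (by linarith)
    have h5 : max |1 - p| |Real.exp (-p)| ^ (m - 1) ≤ 1 :=
      pow_le_one₀ (le_max_of_le_left (abs_nonneg _)) h4
    calc _ ≤ _ := h1
      _ ≤ p ^ 2 * m * 1 := by gcongr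
      _ = _ := by ring
  have e2 : |p ^ m| ≤ p := by
    rw [abs_of_nonneg (by positivity)]
    calc p ^ m ≤ p ^ 1 := pow_le_pow_of_le_one hp0 hp1 hm
      _ = p := pow_one p
  have e3 : |Real.exp (-p) ^ m - Real.exp (-(((m + 1 : ℕ) : ℝ) * p))| ≤ p := by
    have h1 : Real.exp (-(((m + 1 : ℕ) : ℝ) * p)) = Real.exp (-p) ^ m * Real.exp (-p) := by
      rw [← pow_succ, ← Real.exp_nat_mul]
      congr 1
      ring
    rw [h1]
    have h2 : Real.exp (-p) ≤ 1 := Real.exp_le_one_iff.2 (by linarith)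
    have h3 : Real.exp (-p) ^ m ≤ 1 := pow_le_one₀ (Real.exp_pos _).le h2
    have h3' : 0 ≤ Real.exp (-p) ^ m := by positivity
    have h4 := Real.add_one_le_exp (-p)
    rw [show Real.exp (-p) ^ m - Real.exp (-p) ^ m * Real.exp (-p) =
      Real.exp (-p) ^ m * (1 - Real.exp (-p)) by ring,
      abs_of_nonneg (mul_nonneg h3' (by linarith))]
    calc _ ≤ 1 * (1 - Real.exp (-p)) := by
            apply mul_le_mul_of_nonneg_right h3 (by linarith)
      _ ≤ p := by linarith
  have e4 : ((((m + 1 : ℕ) : ℝ) * p) ^ 2 + 2 * (((m + 1 : ℕ) : ℝ) * p)) * (((m + 1 : ℕ) : ℝ))⁻¹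
      = p ^ 2 * ((m : ℝ) + 1) + 2 * p := by
    push_cast
    have : (m : ℝ) + 1 ≠ 0 := by positivity
    field_simp
  rw [e4]
  have hsq : 0 ≤ p ^ 2 := by positivity
  rw [abs_le] at *
  constructor <;> linarith [e1.1, e1.2, e2.1, e2.2, e3.1, e3.2]

lemma np_eq (N b x e w p h : ℝ) (hN : 0 ≤ N) (hb : 0 < b)
    (hN2 : 2 * π * b ^ 2 * Real.exp (b ^ 2) = N ^ 2) (he : e = (b ^ 2)⁻¹)
    (hw : w = 2 * x * e - 2 * (x + 1) * e ^ 2) (hw1 : 0 < 1 + w)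
    (hh : h = b * √(1 + w)) :
    N * p = Real.exp (-x) * (Real.exp ((x + 1) * e - Real.log (1 + w) / 2) *
      ((p * √(2 * π)) * h * Real.exp (h ^ 2 / 2))) := by
  have h1 : N = √(2 * π) * b * Real.exp (b ^ 2 / 2) := by
    have : N ^ 2 = (√(2 * π) * b * Real.exp (b ^ 2 / 2)) ^ 2 := by
      rw [mul_pow, mul_pow, Real.sq_sqrt (by positivity), ← hN2, ← Real.exp_nat_mul]
      congr 2
      push_cast
      ring
    exact (pow_left_inj₀ hN (by positivity) two_ne_zero).1 this
  have h2 : h ^ 2 / 2 = b ^ 2 / 2 + x - (x + 1) * e := by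
    rw [hh, mul_pow, Real.sq_sqrt hw1.le, hw, he]
    field_simp
    ring
  have h3 : Real.exp (Real.log (1 + w) / 2) = √(1 + w) := by
    rw [Real.sqrt_eq_rpow, Real.rpow_def_of_pos hw1]
    congr 1
    ring
  have h4 : √(1 + w) ≠ 0 := (Real.sqrt_pos.2 hw1).ne'
  rw [h2, h1, Real.exp_sub _ (Real.log (1 + w) / 2), h3, hh, Real.exp_sub, Real.exp_add,
    Real.exp_neg]
  have := (Real.exp_pos x).ne'
  have := (Real.exp_pos ((x + 1) * e)).ne'
  field_simp

lemma tendsto_b (b : ℕ → ℝ)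
    (hb : ∀ n : ℕ, 1 ≤ n → 0 < b n ∧
      2 * Real.pi * (b n) ^ 2 * Real.exp ((b n) ^ 2) = (n : ℝ) ^ 2) :
    Tendsto (fun n => b n ^ 2) atTop atTop := by
  rw [tendsto_atTop]
  intro K
  have h1 : Tendsto (fun n : ℕ => (n : ℝ) ^ 2) atTop atTop :=
    (tendsto_pow_atTop (by norm_num)).comp tendsto_natCast_atTop_atTop
  filter_upwards [h1.eventually_gt_atTop (2 * π * K * Real.exp K), eventually_ge_atTop 1]
    with n hn hn1
  by_contra! hlt
  rw [← (hb n hn1).2] at hn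
  have : 2 * π * b n ^ 2 * Real.exp (b n ^ 2) ≤ 2 * π * K * Real.exp K := by
    have h0 : 0 < b n ^ 2 := pow_pos (hb n hn1).1 2
    have hK : 0 < K := h0.trans hlt
    gcongr
  linarith

lemma inv_n_bound (N s : ℝ) (hN : 0 < N) (hs : 1 ≤ s)
    (h : 2 * π * s * Real.exp s = N ^ 2) : N⁻¹ ≤ 384 * s⁻¹ ^ 4 := by
  have h1 : Real.exp (s / 2) ≤ N := by
    refine le_of_sq_le_sq ?_ hN.le
    rw [← h, ← Real.exp_nat_mul]
    have : ((2 : ℕ) : ℝ) * (s / 2) = s := by push_cast; ring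
    rw [this]
    refine le_mul_of_one_le_left (Real.exp_pos _).le ?_
    nlinarith [Real.pi_gt_three]
  have h2 := Real.pow_div_factorial_le_exp (s / 2) (by linarith) 4
  have h3 : s ^ 4 / 384 ≤ N := by
    refine le_trans (le_of_eq ?_) (h2.trans h1)
    simp [Nat.factorial]
    ring
  have h4 : 0 < s ^ 4 / 384 := by positivity
  calc N⁻¹ ≤ (s ^ 4 / 384)⁻¹ := inv_anti₀ h4 h3
    _ = _ := by field_simp

end PowExt

open PowExt Asymptotics

theorem powered_extremes_nu_expansion_t_eq_two
    (b : ℕ → ℝ)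
    (hb : ∀ n : ℕ, 1 ≤ n → 0 < b n ∧
      2 * Real.pi * (b n) ^ 2 * Real.exp ((b n) ^ 2) = (n : ℝ) ^ 2)
    (x : ℝ)
    (c d h ν : ℕ → ℝ)
    (hc : ∀ n : ℕ, c n = 2 - 2 / (b n) ^ 2)
    (hd : ∀ n : ℕ, d n = (b n) ^ 2 - 2 / (b n) ^ 2)
    (hh : ∀ n : ℕ, h n = (c n * x + d n) ^ ((1 : ℝ) / 2))
    (hν : ∀ n : ℕ, ν n = stdNormalCDF (h n) ^ (n - 1) -
      (1 - stdNormalCDF (h n)) ^ (n - 1)) :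
    ∃ C > (0 : ℝ), ∃ N : ℕ, ∀ n : ℕ, N ≤ n →
      0 < c n * x + d n ∧
      |ν n -
        gumbel x * (1 - Real.exp (-x) / (b n) ^ 4 * (7 / 2 + 3 * x + x ^ 2) +
          Real.exp (-x) / (b n) ^ 6 *
            (43 / 3 + 14 * x + 6 * x ^ 2 + 4 / 3 * x ^ 3))|
      ≤ C / (b n) ^ 8 := by
  have hbt := tendsto_b b hb
  set e : ℕ → ℝ := fun n => (b n ^ 2)⁻¹ with he_def
  have he : Tendsto e atTop (𝓝 0) := tendsto_inv_atTop_zero.comp hbt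
  set w : ℕ → ℝ := fun n => 2 * x * e n - 2 * (x + 1) * e n ^ 2 with hw_def
  have Te : T e e 0 1 0 0 := by
    refine (isBigO_zero _ _).congr_left fun n => ?_
    ring
  have Tw : T e w 0 (2 * x) (-2 * (x + 1)) 0 := by
    refine (isBigO_zero _ _).congr_left fun n => ?_
    simp only [hw_def]
    ring
  have hw0 : Tendsto w atTop (𝓝 0) := Tw.tendsto he
  have hw1 : ∀ᶠ n in atTop, 1 / 2 < 1 + w n := by
    filter_upwards [hw0.eventually (lt_mem_nhds (show (-1 / 2 : ℝ) < 0 by norm_num))] with n hn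
    linarith
  -- basic facts on h
  have hfacts : ∀ᶠ n in atTop, 2 ≤ n ∧ 1 ≤ b n ^ 2 ∧ 0 < b n ∧ 0 < 1 + w n ∧
      c n * x + d n = b n ^ 2 * (1 + w n) ∧ h n = b n * √(1 + w n) ∧
      2 ≤ h n ∧ (h n ^ 2)⁻¹ = e n * (1 + w n)⁻¹ := by
    filter_upwards [hw1, hbt.eventually_ge_atTop 8, eventually_ge_atTop 2] with n h1 h2 h3
    have hbn := (hb n (by omega)).1
    have h4 : c n * x + d n = b n ^ 2 * (1 + w n) := by
      rw [hc, hd]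
      simp only [hw_def, he_def]
      field_simp
      ring
    have h5 : h n = b n * √(1 + w n) := by
      rw [hh, h4, ← Real.sqrt_eq_rpow, Real.sqrt_mul (by positivity), Real.sqrt_sq hbn.le]
    have h6 : h n ^ 2 = b n ^ 2 * (1 + w n) := by
      rw [h5, mul_pow, Real.sq_sqrt (by linarith)]
    refine ⟨h3, by linarith, hbn, by linarith, h4, h5, ?_, ?_⟩
    · refine le_of_sq_le_sq ?_ (by rw [h5]; positivity)
      rw [h6]
      nlinarith
    · rw [h6, mul_inv]
  have TE := ((Te.smul (x + 1)).add ((Tw.comp he log_cubic).smul (-1 / 2))).congr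
    (b0 := 0) (by ring) rfl rfl rfl
  have TE := TE.comp he exp_cubic
  have Tq := (Te.mul he (Tw.comp he inv_cubic)).congr (b0 := 0) (by ring) rfl rfl rfl
  have TM := Tq.cubic he 1 (-1) 3 (-15)
  set mill : ℕ → ℝ := fun n =>
    ((1 - stdNormalCDF (h n)) * √(2 * π)) * h n * Real.exp (h n ^ 2 / 2) with hmill
  have Tmill := TM.of_isBigO (g := mill) (by
    refine IsBigO.trans (IsBigO.of_bound 105 ?_) ((Tq.isBigO_e he).pow 4)
    filter_upwards [hfacts] with n ⟨_, _, _, _, _, _, h7, h8⟩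
    have := mills (h n) h7
    rw [h8] at this
    rw [Real.norm_eq_abs, Real.norm_eq_abs, abs_pow, ← abs_pow,
      abs_of_nonneg (by positivity : 0 ≤ (e n * (1 + w n)⁻¹) ^ 4)]
    refine le_trans (le_of_eq ?_) this
    congr 1
    simp only [hmill]
    ring)
  have TF := (TE.mul he Tmill).smul (Real.exp (-x))
  set u : ℕ → ℝ := fun n => n * (1 - stdNormalCDF (h n)) with hu
  set A := Real.exp (-x) * (7 / 2 + 3 * x + x ^ 2) with hA
  set B := Real.exp (-x) * (43 / 3 + 14 * x + 6 * x ^ 2 + 4 / 3 * x ^ 3) with hB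
  have Tu0 := TF.congr (b0 := Real.exp (-x)) (b1 := 0) (b2 := A) (b3 := -B)
    (by ring) (by ring) (by rw [hA]; ring) (by rw [hB]; ring)
  have Tu : T e u (Real.exp (-x)) 0 A (-B) := by
    refine IsBigO.congr' Tu0 ?_ EventuallyEq.rfl
    filter_upwards [hfacts] with n ⟨h1, _, h3, h4, _, h6, _, _⟩
    have := np_eq n (b n) x (e n) (w n) (1 - stdNormalCDF (h n)) (h n) (by positivity) h3
      (hb n (by omega)).2 rfl rfl h4 h6
    simp only [hu, hmill]
    rw [this]
    congr 5
    ring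
  have Tδ := ((T.const (e := e) (Real.exp (-x))).add (Tu.smul (-1))).congr
    (b0 := 0) (by ring) rfl rfl rfl
  have Tex := (Tδ.comp he exp_cubic).smul (gumbel x)
  have hν1 : (fun n => ν n - Real.exp (-u n)) =O[atTop] fun n => e n ^ 4 := by
    have hub : (fun n => u n ^ 2 + 2 * u n) =O[atTop] (fun _ => (1 : ℝ)) :=
      (((Tu.tendsto he).pow 2).add ((Tu.tendsto he).const_mul 2)).isBigO_one ℝ
    have hn : (fun n : ℕ => (n : ℝ)⁻¹) =O[atTop] fun n => e n ^ 4 := by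
      refine IsBigO.of_bound 384 ?_
      filter_upwards [hfacts] with n ⟨h1, h2, _⟩
      have hnp : (0 : ℝ) < n := by
        have : 0 < n := by omega
        exact_mod_cast this
      have := inv_n_bound n (b n ^ 2) hnp h2 (hb n (by omega)).2
      rw [Real.norm_eq_abs, Real.norm_eq_abs, abs_of_pos (by positivity),
        abs_of_nonneg (by positivity)]
      exact this
    have hp := hub.mul hn
    simp only [one_mul] at hp
    refine IsBigO.trans (IsBigO.of_bound 1 ?_) hp
    filter_upwards [hfacts] with n ⟨h1, _⟩
    have hcb := cdf_bounds (h n)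
    have := pow_approx n h1 (1 - stdNormalCDF (h n)) (by linarith) (by linarith)
    rw [sub_sub_cancel] at this
    rw [Real.norm_eq_abs, Real.norm_eq_abs, one_mul, hν]
    exact this.trans (le_abs_self _)
  have hgoal : T e ν (gumbel x) 0 (-(gumbel x * A)) (gumbel x * B) := by
    refine T.congr (T.of_isBigO Tex (hν1.congr_left fun n => ?_)) ?_ ?_ ?_ ?_
    · congr 1
      rw [gumbel, ← Real.exp_add]
      congr 1
      ring
    · ring
    · ring
    · ring
    · ring
  obtain ⟨C, hC, hCb⟩ := IsBigO.exists_pos hgoal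
  rw [IsBigOWith] at hCb
  obtain ⟨N, hN⟩ := eventually_atTop.1 (hCb.and hfacts)
  refine ⟨C, hC, N, fun n hn => ?_⟩
  obtain ⟨k1, _, _, k3, k4, k5, _, _⟩ := hN n hn
  refine ⟨by rw [k5]; positivity, ?_⟩
  rw [Real.norm_eq_abs, Real.norm_eq_abs, abs_of_nonneg (by positivity : 0 ≤ e n ^ 4)] at k1
  have r1 : C / b n ^ 8 = C * e n ^ 4 := by
    simp only [he_def]
    field_simp
  rw [r1]
  refine le_trans (le_of_eq ?_) k1
  congr 1
  simp only [hA, hB, he_def]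
  field_simp
  ring
end
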